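/- Let G be a simple 3-connected graph with n vertices. If the circumference of G satisfies c(G) ≥ n - 3, then every longest cycle of G shares at least one edge with every largest bond of G. -/

import Mathlib

open SimpleGraph

/-- An edge-cut of `G`: a set of edges of `G` whose deletion disconnects `G`. -/
def IsEdgeCut {V : Type*} (G : SimpleGraph V) (S : Set (Sym2 V)) : Prop :=
  S ⊆ G.edgeSet ∧ ¬ (G.deleteEdges S).Connected

/-- A bond: a minimal nonempty edge-cut. -/
def IsBond {V : Type*} (G : SimpleGraph V) (S : Set (Sym2 V)) : Prop :=
  S.Nonempty ∧ IsEdgeCut G S ∧ ∀ T ⊂ S, T.Nonempty → ¬ IsEdgeCut G T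

/-- A largest bond: a bond of maximum size. -/
def IsLargestBond {V : Type*} (G : SimpleGraph V) (S : Set (Sym2 V)) : Prop :=
  IsBond G S ∧ ∀ T, IsBond G T → T.ncard ≤ S.ncard

/-- The set of edges of `G` between `X` and its complement. -/
def crossEdges {V : Type*} (G : SimpleGraph V) (X : Set V) : Set (Sym2 V) :=
  {e ∈ G.edgeSet | ∃ x ∈ X, ∃ y ∈ Xᶜ, e = s(x, y)}

/-- `G` is 2-connected: at least 3 vertices and connected after deleting any ≤ 1 vertices. -/
def TwoConnected {V : Type*} (G : SimpleGraph V) : Prop :=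
  3 ≤ Nat.card V ∧ ∀ s : Set V, s.ncard ≤ 1 → (G.induce sᶜ).Connected

/-- `G` is 3-connected: at least 4 vertices and connected after deleting any ≤ 2 vertices. -/
def ThreeConnected {V : Type*} (G : SimpleGraph V) : Prop :=
  4 ≤ Nat.card V ∧ ∀ s : Set V, s.ncard ≤ 2 → (G.induce sᶜ).Connected

/-- A longest cycle of `G`. -/
def IsLongestCycle {V : Type*} (G : SimpleGraph V) {v : V} (C : G.Walk v v) : Prop :=
  C.IsCycle ∧ ∀ (u : V) (D : G.Walk u u), D.IsCycle → D.length ≤ C.length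

/-!
Suppose a largest bond misses the longest cycle `C`, and let `Y` be the side of the bond that avoids
`C`; it has at most three vertices. Let `v ∈ C` have a neighbour in `Y` and let `w`, `x` be the next
two vertices on `C`. Since `C` is longest, a detour through `Y` shows that `w` has no neighbour in
`Y`, and neither has `x` if `v` is adjacent to all of `Y` and `|Y| ≥ 2`. All degrees are at least
three, so moving `w`, and then possibly `x`, across the cut around `Y ∪ {v}` enlarges it strictly.
Moving `v` itself loses at most one edge when `|Y| = 3`, and none when `|Y| = 2`. Hence the cut
around `Y ∪ {v, w}` if `|Y| = 2`, or around `Y ∪ {v, w, x}` if `|Y| = 3`, is larger. It is again a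
bond: at most one vertex `r` lies outside `Y` and `C`, only if `|Y| = 2`, and 3-connectedness allows
a choice of `v` for which `r` keeps a neighbour on the rest of `C`. If `Y = {y}`, the cut around
`{v, y}` is already larger.
-/

section Connectivity

variable {V : Type*} {G : SimpleGraph V} {X A D Z : Set V} {v z : V}

lemma exists_adj_mem_notMem (hG : G.Preconnected) (hX : X.Nonempty) (hXc : Xᶜ.Nonempty) :
    ∃ x ∈ X, ∃ y ∉ X, G.Adj x y := by
  obtain ⟨a, ha⟩ := hX
  obtain ⟨b, hb⟩ := hXc
  obtain ⟨p⟩ := hG a b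
  obtain ⟨d, -, hfst, hsnd⟩ := p.exists_boundary_dart X ha hb
  exact ⟨d.fst, hfst, d.snd, hsnd, d.adj⟩

lemma exists_isPath_of_connected_induce (hD : (G.induce D).Connected) {y y' : V}
    (hy : y ∈ D) (hy' : y' ∈ D) :
    ∃ q : G.Walk y y', q.IsPath ∧ ∀ z ∈ q.support, z ∈ D := by
  obtain ⟨q, hq⟩ := hD.exists_isPath ⟨y, hy⟩ ⟨y', hy'⟩
  refine ⟨q.map (Embedding.induce D).toHom, hq.map Subtype.val_injective, fun z hz => ?_⟩
  obtain ⟨a, -, rfl⟩ := List.mem_map.1 (q.support_map _ ▸ hz)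
  exact a.2

lemma connected_induce_insert (hZ : (G.induce Z).Connected) (hz : z ∈ Z) (h : G.Adj v z) :
    (G.induce (insert v Z)).Connected :=
  connected_induce_union (Preconnected.of_subsingleton (V := ({v} : Set V))) hZ.preconnected
    (Set.mem_singleton v) hz h

lemma connected_induce_of_dominating (hA : (G.induce A).Connected) (hAZ : A ⊆ Z)
    (h : ∀ r ∈ Z, r ∉ A → ∃ a ∈ A, G.Adj r a) : (G.induce Z).Connected := by
  obtain ⟨a⟩ := hA.nonempty
  refine induce_connected_of_patches a.1 (hAZ a.2) fun {r} hr => ?_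
  by_cases hrA : r ∈ A
  · exact ⟨A, hAZ, a.2, hrA, hA.preconnected _ _⟩
  · obtain ⟨b, hb, hrb⟩ := h r hr hrA
    exact ⟨insert r A, Set.insert_subset hr hAZ, Set.mem_insert_of_mem _ a.2,
      Set.mem_insert _ _, (connected_induce_insert hA hb hrb).preconnected _ _⟩

lemma ThreeConnected.connected (h3 : ThreeConnected G) : G.Connected := by
  have h := h3.2 ∅ (by simp)
  rw [Set.compl_empty] at h
  exact (induceUnivIso G).connected_iff.1 h

lemma ThreeConnected.exists_adj (h3 : ThreeConnected G) {s : Set V} (hs : s.ncard ≤ 2)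
    (hX : (X \ s).Nonempty) (hXc : (Xᶜ \ s).Nonempty) :
    ∃ x ∈ X \ s, ∃ y ∈ Xᶜ \ s, G.Adj x y := by
  obtain ⟨a, haX, has⟩ := hX
  obtain ⟨b, hbX, hbs⟩ := hXc
  obtain ⟨x, hx, y, hy, hxy⟩ := exists_adj_mem_notMem (h3.2 s hs).preconnected
    (X := Subtype.val ⁻¹' X) ⟨⟨a, has⟩, haX⟩ ⟨⟨b, hbs⟩, hbX⟩
  exact ⟨x, ⟨hx, x.2⟩, y, ⟨hy, y.2⟩, hxy⟩

lemma ThreeConnected.three_le_ncard_neighborSet [Finite V] (h3 : ThreeConnected G) (v : V) :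
    3 ≤ (G.neighborSet v).ncard := by
  by_contra! hlt
  have hcard : (insert v (G.neighborSet v)).ncard < (Set.univ : Set V).ncard := by
    have := Set.ncard_insert_le v (G.neighborSet v)
    have := h3.1
    rw [Set.ncard_univ]
    omega
  obtain ⟨b, -, hb⟩ := Set.exists_mem_notMem_of_ncard_lt_ncard hcard
  rw [Set.mem_insert_iff, not_or] at hb
  obtain ⟨x, ⟨rfl, -⟩, y, ⟨-, hy⟩, hxy⟩ := h3.exists_adj (X := {v}) (Nat.le_of_lt_succ hlt)
    ⟨v, rfl, G.notMem_neighborSet_self⟩ ⟨b, hb⟩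
  exact hy hxy

end Connectivity

section Bonds

variable {V : Type*} {G : SimpleGraph V} {X Y : Set V} {B : Set (Sym2 V)}

lemma mk_mem_crossEdges {a b : V} :
    s(a, b) ∈ crossEdges G X ↔ G.Adj a b ∧ ¬(a ∈ X ↔ b ∈ X) := by
  simp only [crossEdges, Set.mem_ofPred_eq, mem_edgeSet, Set.mem_compl_iff, Sym2.eq_iff]
  grind

lemma crossEdges_nonempty (hG : G.Connected) (hX : X.Nonempty) (hXc : Xᶜ.Nonempty) :
    (crossEdges G X).Nonempty := by
  obtain ⟨x, hx, y, hy, hxy⟩ := exists_adj_mem_notMem hG.preconnected hX hXc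
  exact ⟨s(x, y), hxy, x, hx, y, hy, rfl⟩

lemma isEdgeCut_crossEdges (hX : X.Nonempty) (hXc : Xᶜ.Nonempty) :
    IsEdgeCut G (crossEdges G X) := by
  refine ⟨fun e he => he.1, fun hconn => ?_⟩
  obtain ⟨x, hx, y, hy, hxy⟩ := exists_adj_mem_notMem hconn.preconnected hX hXc
  rw [deleteEdges_adj] at hxy
  exact hxy.2 ⟨hxy.1, x, hx, y, hy, rfl⟩

lemma reachable_deleteEdges_of_connected_induce {T : Set (Sym2 V)} (hX : (G.induce X).Connected)
    (hT : ∀ a ∈ X, ∀ b ∈ X, s(a, b) ∉ T) {a b : V} (ha : a ∈ X) (hb : b ∈ X) :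
    (G.deleteEdges T).Reachable a b := by
  let f : G.induce X →g G.deleteEdges T :=
    { toFun := Subtype.val
      map_rel' := fun {s t} hst => deleteEdges_adj.2 ⟨hst, hT s s.2 t t.2⟩ }
  exact (hX.preconnected ⟨a, ha⟩ ⟨b, hb⟩).map f

lemma connected_deleteEdges_of_ssubset_crossEdges {T : Set (Sym2 V)}
    (hX : (G.induce X).Connected) (hXc : (G.induce Xᶜ).Connected) (hT : T ⊂ crossEdges G X) :
    (G.deleteEdges T).Connected := by
  obtain ⟨_, ⟨hxy, x, hx, y, hy, rfl⟩, hxyT⟩ := Set.exists_of_ssubset hT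
  have hsame {a b : V} (hab : a ∈ X ↔ b ∈ X) : s(a, b) ∉ T :=
    fun h => (mk_mem_crossEdges.1 (hT.1 h)).2 hab
  refine (connected_iff_exists_forall_reachable _).2 ⟨x, fun z => ?_⟩
  by_cases hz : z ∈ X
  · exact reachable_deleteEdges_of_connected_induce hX
      (fun a ha b hb => hsame (iff_of_true ha hb)) hx hz
  · have hadj : (G.deleteEdges T).Adj x y := deleteEdges_adj.2 ⟨hxy, hxyT⟩
    exact hadj.reachable.trans <| reachable_deleteEdges_of_connected_induce hXc
      (fun a ha b hb => hsame (iff_of_false ha hb)) hy hz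

lemma isBond_crossEdges (hG : G.Connected) (hX : (G.induce X).Connected)
    (hXc : (G.induce Xᶜ).Connected) : IsBond G (crossEdges G X) := by
  have hne : X.Nonempty := Set.nonempty_coe_sort.1 hX.nonempty
  have hnec : Xᶜ.Nonempty := Set.nonempty_coe_sort.1 hXc.nonempty
  exact ⟨crossEdges_nonempty hG hne hnec, isEdgeCut_crossEdges hne hnec, fun T hT _ hcut =>
    hcut.2 (connected_deleteEdges_of_ssubset_crossEdges hX hXc hT)⟩

lemma IsBond.eq_crossEdges_supp (hG : G.Connected) (hB : IsBond G B)
    (K : (G.deleteEdges B).ConnectedComponent) (hK : K.suppᶜ.Nonempty) :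
    B = crossEdges G K.supp := by
  obtain ⟨-, -, hmin⟩ := hB
  have hsub : crossEdges G K.supp ⊆ B := by
    rintro _ ⟨hab, a, ha, b, hb, rfl⟩
    by_contra habB
    exact hb ((K.mem_supp_congr_adj (deleteEdges_adj.2 ⟨hab, habB⟩)).1 ha)
  by_contra hne
  exact hmin _ (hsub.ssubset_of_ne (Ne.symm hne)) (crossEdges_nonempty hG K.nonempty_supp hK)
    (isEdgeCut_crossEdges K.nonempty_supp hK)

lemma IsBond.exists_eq_crossEdges_of_walk (hG : G.Connected) (hB : IsBond G B) {u w : V}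
    (p : G.Walk u w) (hp : ∀ e ∈ p.edges, e ∉ B) :
    ∃ Y : Set V, (G.induce Y).Connected ∧ (∀ z ∈ p.support, z ∉ Y) ∧ B = crossEdges G Y := by
  classical
  obtain ⟨y, hy⟩ : ∃ y, ¬ (G.deleteEdges B).Reachable u y := by
    by_contra! h
    exact hB.2.1.2 ((connected_iff_exists_forall_reachable _).2 ⟨u, h⟩)
  set K := (G.deleteEdges B).connectedComponentMk y
  have hpK : ∀ z ∈ p.support, z ∉ K.supp := by
    intro z hz hzK
    have hz' : z ∈ (p.toDeleteEdges B hp).support := by simpa using hz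
    exact hy (((p.toDeleteEdges B hp).takeUntil z hz').reachable.trans
      (ConnectedComponent.exact hzK))
  have hK : ((G.deleteEdges B).induce K.supp).Connected := K.maximal_connected_induce_supp.prop
  exact ⟨K.supp, hK.mono fun a b hab => deleteEdges_le B hab, hpK,
    hB.eq_crossEdges_supp hG K ⟨u, hpK u p.start_mem_support⟩⟩

lemma IsLargestBond.ncard_crossEdges_le (hB : IsLargestBond G B) (hG : G.Connected)
    (hX : (G.induce X).Connected) (hXc : (G.induce Xᶜ).Connected) :
    (crossEdges G X).ncard ≤ B.ncard :=
  hB.2 _ (isBond_crossEdges hG hX hXc)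

end Bonds

section CutSize

variable {V : Type*} [Finite V] {G : SimpleGraph V} {Z : Set V} {v : V}

lemma ncard_crossEdges_insert (hv : v ∉ Z) :
    (crossEdges G (insert v Z)).ncard + (G.neighborSet v ∩ Z).ncard
      = (crossEdges G Z).ncard + (G.neighborSet v \ Z).ncard := by
  have hinj : Function.Injective (fun z : V => s(v, z)) := fun a b hab => Sym2.congr_right.1 hab
  have hdisj_insert : Disjoint (crossEdges G (insert v Z))
      ((fun z => s(v, z)) '' (G.neighborSet v ∩ Z)) := by
    rw [Set.disjoint_right]
    rintro _ ⟨z, hz, rfl⟩ h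
    exact (mk_mem_crossEdges.1 h).2
      (iff_of_true (Set.mem_insert v Z) (Set.mem_insert_of_mem v hz.2))
  have hdisj : Disjoint (crossEdges G Z) ((fun z => s(v, z)) '' (G.neighborSet v \ Z)) := by
    rw [Set.disjoint_right]
    rintro _ ⟨z, hz, rfl⟩ h
    exact (mk_mem_crossEdges.1 h).2 (iff_of_false hv hz.2)
  have hunion : crossEdges G (insert v Z) ∪ (fun z => s(v, z)) '' (G.neighborSet v ∩ Z)
      = crossEdges G Z ∪ (fun z => s(v, z)) '' (G.neighborSet v \ Z) := by
    ext e
    induction e using Sym2.ind with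
    | _ a b =>
      simp only [Set.mem_union, mk_mem_crossEdges, Set.mem_image, Set.mem_inter_iff,
        Set.mem_sdiff, mem_neighborSet, Set.mem_insert_iff, Sym2.eq_iff]
      grind [G.adj_comm a b, SimpleGraph.irrefl]
  rw [← Set.ncard_image_of_injective _ hinj, ← Set.ncard_image_of_injective _ hinj,
    ← Set.ncard_union_eq hdisj_insert, ← Set.ncard_union_eq hdisj, hunion]

lemma ncard_crossEdges_lt_insert (hv : v ∉ Z) (hdeg : 3 ≤ (G.neighborSet v).ncard)
    {w : V} (hw : G.neighborSet v ∩ Z ⊆ {w}) :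
    (crossEdges G Z).ncard < (crossEdges G (insert v Z)).ncard := by
  have hcut := ncard_crossEdges_insert (G := G) hv
  have hsplit := Set.ncard_inter_add_ncard_sdiff_eq_ncard (G.neighborSet v) Z
  have hle := Set.ncard_le_ncard hw
  rw [Set.ncard_singleton] at hle
  omega

end CutSize

section Walks

variable {V : Type*} {G : SimpleGraph V} {u a b : V}

lemma setOf_mem_support_tail {p : G.Walk a b} (hp : p.IsPath) (hnil : ¬p.Nil) :
    {z | z ∈ p.tail.support} = {z | z ∈ p.support} \ {a} := by
  have hnodup := hp.support_nodup
  rw [← p.cons_support_tail hnil] at hnodup ⊢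
  ext z
  simp only [Set.mem_ofPred_eq, Set.mem_sdiff, List.mem_cons, Set.mem_singleton_iff]
  grind

lemma setOf_mem_support_dropLast {p : G.Walk a b} (hp : p.IsPath) (hnil : ¬p.Nil) :
    {z | z ∈ p.dropLast.support} = {z | z ∈ p.support} \ {b} := by
  have hnodup := hp.support_nodup
  rw [← p.support_dropLast_concat hnil] at hnodup ⊢
  ext z
  simp only [Set.mem_ofPred_eq, Set.mem_sdiff, List.mem_append, Set.mem_singleton_iff]
  grind

lemma connected_induce_support_sdiff_ends {p : G.Walk a b} (hp : p.IsPath) (hlen : 2 ≤ p.length) :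
    (G.induce ({z | z ∈ p.support} \ {a, b})).Connected := by
  have hnil : ¬p.Nil := Walk.not_nil_iff_lt_length.2 (by omega)
  have hnil' : ¬p.tail.Nil := Walk.not_nil_iff_lt_length.2 (by rw [p.length_tail]; omega)
  have := p.tail.dropLast.connected_induce_support
  rwa [setOf_mem_support_dropLast hp.tail hnil', setOf_mem_support_tail hp hnil, sdiff_sdiff]
    at this

lemma setOf_mem_support_tail_of_isCycle {C : G.Walk u u} (hC : C.IsCycle) :
    {z | z ∈ C.tail.support} = {z | z ∈ C.support} := by
  ext z
  simp only [Set.mem_ofPred_eq, ← C.cons_support_tail hC.not_nil, List.mem_cons]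
  grind [C.tail.end_mem_support]

lemma ncard_setOf_mem_support_of_isCycle {C : G.Walk u u} (hC : C.IsCycle) :
    {z | z ∈ C.support}.ncard = C.length := by
  classical
  rw [← setOf_mem_support_tail_of_isCycle hC, ← List.coe_toFinset, Set.ncard_coe_finset,
    List.toFinset_card_of_nodup hC.isPath_tail.support_nodup, Walk.length_support,
    C.length_tail_add_one hC.not_nil]

lemma not_nil_tail_of_isCycle {C : G.Walk u u} (hC : C.IsCycle) : ¬C.tail.Nil := by
  have := hC.three_le_length
  exact Walk.not_nil_iff_lt_length.2 (by rw [C.length_tail]; omega)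

lemma tail_snd_mem_support (C : G.Walk u u) : C.tail.snd ∈ C.support :=
  (C.isSubwalk_drop 1).support_subset (C.tail.getVert_mem_support 1)

lemma tail_snd_ne_of_isCycle {C : G.Walk u u} (hC : C.IsCycle) : C.tail.snd ≠ u := by
  have := hC.three_le_length
  rw [Walk.snd, C.getVert_tail, Ne, hC.getVert_endpoint_iff (by omega)]
  omega

lemma tail_snd_ne_penultimate {C : G.Walk u u} (hC : C.IsCycle) (hlen : 4 ≤ C.length) :
    C.tail.snd ≠ C.penultimate := by
  rw [Walk.snd, C.getVert_tail]
  intro h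
  have := hC.getVert_injOn ⟨by omega, by omega⟩ ⟨by omega, by omega⟩ h
  omega

lemma connected_induce_support_sdiff_pair {C : G.Walk u u} (hC : C.IsCycle) :
    (G.induce ({z | z ∈ C.support} \ {u, C.snd})).Connected := by
  have hlen := hC.three_le_length
  have h := connected_induce_support_sdiff_ends hC.isPath_tail (by rw [C.length_tail]; omega)
  rwa [setOf_mem_support_tail_of_isCycle hC, Set.pair_comm] at h

lemma connected_induce_support_sdiff_triple {C : G.Walk u u} (hC : C.IsCycle)
    (hlen : 4 ≤ C.length) :
    (G.induce ({z | z ∈ C.support} \ {u, C.snd, C.tail.snd})).Connected := by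
  have h := connected_induce_support_sdiff_ends hC.isPath_tail.tail
    (by rw [C.tail.length_tail, C.length_tail]; omega)
  rwa [setOf_mem_support_tail hC.isPath_tail (not_nil_tail_of_isCycle hC),
    setOf_mem_support_tail_of_isCycle hC, Set.sdiff_sdiff, Set.singleton_union, Set.pair_comm,
    Set.insert_comm] at h

lemma isCycle_append_cons_concat {y z : V} {p : G.Walk a b} {q : G.Walk y z} (hp : p.IsPath)
    (hq : q.IsPath) (hab : a ≠ b) (hdisj : p.support.Disjoint q.support) (hby : G.Adj b y)
    (hza : G.Adj z a) : (p.append (Walk.cons hby (q.concat hza))).IsCycle := by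
  have ha : a ∉ q.support := hdisj p.start_mem_support
  have hb : b ∉ q.support := hdisj p.end_mem_support
  refine hp.isCycle_append ((hq.concat ha hza).cons ?_) ?_ (Or.inr ?_)
  · simp [Walk.support_concat, hb, hab.symm]
  · have hnodup := hp.support_nodup
    rw [← p.cons_tail_support, List.nodup_cons] at hnodup
    simp only [Walk.support_cons, List.tail_cons, Walk.support_concat, List.disjoint_append_right,
      List.disjoint_singleton]
    exact ⟨fun z hz => hdisj (List.mem_of_mem_tail hz), hnodup.1⟩
  · simp

end Walks

section LongestCycle

variable {V : Type*} {G : SimpleGraph V} {v : V} {C : G.Walk v v}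

lemma IsLongestCycle.exists_of_mem_support (hC : IsLongestCycle G C) {w : V}
    (hw : w ∈ C.support) :
    ∃ D : G.Walk w w, IsLongestCycle G D ∧ ∀ z, z ∈ D.support ↔ z ∈ C.support := by
  classical
  refine ⟨C.rotate w hw, ⟨hC.1.rotate hw, fun x E hE => ?_⟩,
    fun z => C.mem_support_rotate_iff w hw⟩
  exact (hC.2 x E hE).trans_eq (C.length_rotate w hw).symm

lemma IsLongestCycle.length_add_two_le (hC : IsLongestCycle G C) {w : V} {p : G.Walk w v}
    (hp : p.IsPath) (hpC : p.support ⊆ C.support) (hwv : w ≠ v) {y z : V} {q : G.Walk y z}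
    (hq : q.IsPath) (hqC : ∀ x ∈ q.support, x ∉ C.support) (hvy : G.Adj v y) (hzw : G.Adj z w) :
    p.length + q.length + 2 ≤ C.length := by
  have hdisj : p.support.Disjoint q.support := fun x hxp hxq => hqC x hxq (hpC hxp)
  have hle := hC.2 _ _ (isCycle_append_cons_concat hp hq hwv hdisj hvy hzw)
  simp only [Walk.length_append, Walk.length_cons, Walk.length_concat] at hle
  omega

variable {D : Set V} {a b : V}

-- Otherwise a detour through `D` replaces the edge between `v` and `C.snd`.
lemma IsLongestCycle.not_adj_snd (hC : IsLongestCycle G C) (hD : (G.induce D).Connected)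
    (hDC : ∀ z ∈ C.support, z ∉ D) (ha : a ∈ D) (hva : G.Adj v a) (hb : b ∈ D) :
    ¬ G.Adj C.snd b := by
  intro hadj
  obtain ⟨q, hq, hqD⟩ := exists_isPath_of_connected_induce hD ha hb
  have hle := hC.length_add_two_le hC.1.isPath_tail (C.isSubwalk_drop 1).support_subset
    (C.adj_snd hC.1.not_nil).ne' hq (fun x hx hxC => hDC x hxC (hqD x hx)) hva hadj.symm
  have := C.length_tail_add_one hC.1.not_nil
  omega

-- Otherwise a detour through at least two vertices of `D` replaces the single vertex `C.snd`.
lemma IsLongestCycle.not_adj_tail_snd (hC : IsLongestCycle G C) (hD : (G.induce D).Connected)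
    (hDC : ∀ z ∈ C.support, z ∉ D) (ha : a ∈ D) (hva : G.Adj v a) (hb : b ∈ D) (hab : a ≠ b) :
    ¬ G.Adj C.tail.snd b := by
  intro hadj
  obtain ⟨q, hq, hqD⟩ := exists_isPath_of_connected_induce hD ha hb
  have hq_pos : q.length ≠ 0 := fun h => hab (Walk.eq_of_length_eq_zero h)
  have hle := hC.length_add_two_le hC.1.isPath_tail.tail
    (((C.tail.isSubwalk_drop 1).trans (C.isSubwalk_drop 1)).support_subset)
    (tail_snd_ne_of_isCycle hC.1) hq (fun x hx hxC => hDC x hxC (hqD x hx)) hva hadj.symm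
  have := hC.1.three_le_length
  have := C.length_tail
  have := C.tail.length_tail
  omega

variable {Y : Set V} {y : V}

lemma neighborSet_snd_inter_subset (hC : IsLongestCycle G C) (hY : (G.induce Y).Connected)
    (hYC : ∀ z ∈ C.support, z ∉ Y) (hy : y ∈ Y) (hvy : G.Adj v y) :
    G.neighborSet C.snd ∩ insert v Y ⊆ {v} := by
  rintro z ⟨hadj, rfl | hz⟩
  · rfl
  · exact (hC.not_adj_snd hY hYC hy hvy hz hadj).elim

lemma neighborSet_tail_snd_inter_subset (hC : IsLongestCycle G C) (hlen : 4 ≤ C.length)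
    (hY : (G.induce Y).Connected) (hYC : ∀ z ∈ C.support, z ∉ Y) (hYnt : Y.Nontrivial)
    (hYv : Y ⊆ G.neighborSet v) (hv : G.neighborSet v \ Y ⊆ {C.snd, C.penultimate}) :
    G.neighborSet C.tail.snd ∩ insert C.snd (insert v Y) ⊆ {C.snd} := by
  have hxY : C.tail.snd ∉ Y := hYC _ (tail_snd_mem_support C)
  rintro z ⟨hadj, rfl | rfl | hz⟩
  · rfl
  · rcases hv ⟨hadj.symm, hxY⟩ with hx | hx
    · exact ((C.tail.adj_snd (not_nil_tail_of_isCycle hC.1)).ne' hx).elim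
    · exact (tail_snd_ne_penultimate hC.1 hlen hx).elim
  · obtain ⟨a, ha, haz⟩ := hYnt.exists_ne z
    exact (hC.not_adj_tail_snd hY hYC ha (hYv ha) hz haz hadj).elim

lemma connected_induce_insert_snd_insert (hC : C.IsCycle) (hY : (G.induce Y).Connected)
    (hy : y ∈ Y) (hvy : G.Adj v y) : (G.induce (insert C.snd (insert v Y))).Connected :=
  connected_induce_insert (connected_induce_insert hY hy hvy) (Set.mem_insert v Y)
    (C.adj_snd hC.not_nil).symm

lemma connected_induce_compl_insert_snd_insert (hC : C.IsCycle) (hYC : ∀ z ∈ C.support, z ∉ Y)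
    (hR : ∀ r ∉ Y, r ∉ C.support → ∃ a ∈ C.support, a ≠ v ∧ a ≠ C.snd ∧ G.Adj r a) :
    (G.induce (insert C.snd (insert v Y))ᶜ).Connected := by
  refine connected_induce_of_dominating (connected_induce_support_sdiff_pair hC) ?_ ?_
  · rintro z ⟨hzC, hz⟩
    have := hYC z hzC
    grind
  · intro r hr hrA
    obtain ⟨a, haC, hav, haw, hra⟩ := hR r (by grind) (fun hrC => hrA ⟨hrC, by grind⟩)
    exact ⟨a, ⟨haC, by grind⟩, hra⟩

lemma pair_snd_penultimate_subset (hC : C.IsCycle) (hYC : ∀ z ∈ C.support, z ∉ Y) :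
    {C.snd, C.penultimate} ⊆ G.neighborSet v \ Y := by
  rintro z (rfl | rfl)
  · exact ⟨C.adj_snd hC.not_nil, hYC _ (C.getVert_mem_support 1)⟩
  · exact ⟨(C.adj_penultimate hC.not_nil).symm, hYC _ (C.getVert_mem_support _)⟩

end LongestCycle

section LargestBond

variable {V : Type*} {G : SimpleGraph V} {v y r : V} {Y : Set V} {C : G.Walk v v}

lemma IsLargestBond.ncard_crossEdges_insert_le_of_spanning (hB : IsLargestBond G (crossEdges G Y))
    (hG : G.Connected) (hC : C.IsCycle) (hlen : 4 ≤ C.length) (hY : (G.induce Y).Connected)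
    (hYC : ∀ z ∈ C.support, z ∉ Y) (hy : y ∈ Y) (hvy : G.Adj v y)
    (hspan : ∀ z ∉ Y, z ∈ C.support) :
    (crossEdges G (insert C.tail.snd (insert C.snd (insert v Y)))).ncard
      ≤ (crossEdges G Y).ncard := by
  refine hB.ncard_crossEdges_le hG
    (connected_induce_insert (connected_induce_insert_snd_insert hC hY hy hvy)
      (Set.mem_insert _ _) (C.tail.adj_snd (not_nil_tail_of_isCycle hC)).symm) ?_
  have hcompl : (insert C.tail.snd (insert C.snd (insert v Y)))ᶜ
      = {z | z ∈ C.support} \ {v, C.snd, C.tail.snd} := by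
    ext z
    have := hYC z
    have := hspan z
    simp only [Set.mem_compl_iff, Set.mem_insert_iff, Set.mem_sdiff, Set.mem_ofPred_eq,
      Set.mem_singleton_iff]
    tauto
  rw [hcompl]
  exact connected_induce_support_sdiff_triple hC hlen

variable [Finite V]

lemma not_isLargestBond_crossEdges_singleton (h3 : ThreeConnected G) (y : V) :
    ¬ IsLargestBond G (crossEdges G {y}) := by
  intro hB
  obtain ⟨v, hyv : G.Adj y v⟩ : (G.neighborSet y).Nonempty := by
    have := h3.three_le_ncard_neighborSet y
    exact (Set.ncard_pos (Set.toFinite _)).1 (by omega)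
  have hconn : (G.induce {v, y}).Connected := induce_pair_connected_of_adj hyv.symm
  have hle := hB.ncard_crossEdges_le h3.connected hconn
    (h3.2 {v, y} ((Set.ncard_insert_le v {y}).trans (by simp)))
  exact hle.not_gt <| ncard_crossEdges_lt_insert hyv.ne' (h3.three_le_ncard_neighborSet v)
    Set.inter_subset_right

lemma two_le_ncard_neighborSet_sdiff (hC : C.IsCycle) (hYC : ∀ z ∈ C.support, z ∉ Y) :
    2 ≤ (G.neighborSet v \ Y).ncard :=
  (Set.ncard_pair hC.snd_ne_penultimate).symm.trans_le
    (Set.ncard_le_ncard (pair_snd_penultimate_subset hC hYC))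

lemma ncard_crossEdges_insert_lt_insert_snd (h3 : ThreeConnected G) (hC : IsLongestCycle G C)
    (hY : (G.induce Y).Connected) (hYC : ∀ z ∈ C.support, z ∉ Y) (hy : y ∈ Y)
    (hvy : G.Adj v y) :
    (crossEdges G (insert v Y)).ncard < (crossEdges G (insert C.snd (insert v Y))).ncard := by
  refine ncard_crossEdges_lt_insert ?_ (h3.three_le_ncard_neighborSet _)
    (neighborSet_snd_inter_subset hC hY hYC hy hvy)
  rintro (h | h)
  · exact (C.adj_snd hC.1.not_nil).ne' h
  · exact hYC _ (C.getVert_mem_support 1) h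

/- Adding `C.snd` to `Y ∪ {v}` enlarges the cut, so by maximality adding `v` to `Y` must have
shrunk it. -/
lemma IsLargestBond.ncard_neighborSet_sdiff_lt (hB : IsLargestBond G (crossEdges G Y))
    (h3 : ThreeConnected G) (hC : IsLongestCycle G C) (hY : (G.induce Y).Connected)
    (hYC : ∀ z ∈ C.support, z ∉ Y) (hy : y ∈ Y) (hvy : G.Adj v y)
    (hR : ∀ r ∉ Y, r ∉ C.support → ∃ a ∈ C.support, a ≠ v ∧ a ≠ C.snd ∧ G.Adj r a) :
    (G.neighborSet v \ Y).ncard < (G.neighborSet v ∩ Y).ncard := by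
  have hle := hB.ncard_crossEdges_le h3.connected
    (connected_induce_insert_snd_insert hC.1 hY hy hvy)
    (connected_induce_compl_insert_snd_insert hC.1 hYC hR)
  have hlt := ncard_crossEdges_insert_lt_insert_snd h3 hC hY hYC hy hvy
  have hcut := ncard_crossEdges_insert (G := G) (hYC v C.start_mem_support)
  omega

lemma IsLargestBond.three_le_ncard (hB : IsLargestBond G (crossEdges G Y))
    (h3 : ThreeConnected G) (hC : IsLongestCycle G C) (hY : (G.induce Y).Connected)
    (hYC : ∀ z ∈ C.support, z ∉ Y) (hy : y ∈ Y) (hvy : G.Adj v y)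
    (hR : ∀ r ∉ Y, r ∉ C.support → ∃ a ∈ C.support, a ≠ v ∧ a ≠ C.snd ∧ G.Adj r a) :
    3 ≤ Y.ncard := by
  have hlt := hB.ncard_neighborSet_sdiff_lt h3 hC hY hYC hy hvy hR
  have htwo := two_le_ncard_neighborSet_sdiff hC.1 hYC
  have hle : (G.neighborSet v ∩ Y).ncard ≤ Y.ncard := Set.ncard_le_ncard Set.inter_subset_right
  omega

lemma four_le_length_of_spanning (h3 : ThreeConnected G) (hC : IsLongestCycle G C)
    (hY : (G.induce Y).Connected) (hYC : ∀ z ∈ C.support, z ∉ Y) (hy : y ∈ Y) (hvy : G.Adj v y)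
    (hspan : ∀ z ∉ Y, z ∈ C.support) : 4 ≤ C.length := by
  have hsub : G.neighborSet C.snd ⊆ {z | z ∈ C.support} \ {C.snd} := fun z hz =>
    ⟨hspan z fun hzY => hC.not_adj_snd hY hYC hy hvy hzY hz, hz.ne'⟩
  have hdeg := (h3.three_le_ncard_neighborSet C.snd).trans (Set.ncard_le_ncard hsub)
  have hsnd : C.snd ∈ {z | z ∈ C.support} := C.getVert_mem_support 1
  have hcard := Set.ncard_sdiff_singleton_add_one hsnd
  rw [ncard_setOf_mem_support_of_isCycle hC.1] at hcard
  omega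

lemma IsLargestBond.exists_notMem_support (hB : IsLargestBond G (crossEdges G Y))
    (h3 : ThreeConnected G) (hC : IsLongestCycle G C) (hY : (G.induce Y).Connected)
    (hYC : ∀ z ∈ C.support, z ∉ Y) (hcard : Y.ncard ≤ 3) (hy : y ∈ Y) (hvy : G.Adj v y) :
    ∃ r ∉ Y, r ∉ C.support := by
  by_contra! hspan
  have hv : v ∉ Y := hYC v C.start_mem_support
  have hlen := four_le_length_of_spanning h3 hC hY hYC hy hvy hspan
  have hlt := hB.ncard_neighborSet_sdiff_lt h3 hC hY hYC hy hvy
    fun r hr hrC => (hrC (hspan r hr)).elim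
  have htwo := two_le_ncard_neighborSet_sdiff hC.1 hYC
  have hYv : G.neighborSet v ∩ Y = Y :=
    Set.eq_of_subset_of_ncard_le Set.inter_subset_right (by omega)
  rw [hYv] at hlt
  have hpair : {C.snd, C.penultimate} = G.neighborSet v \ Y :=
    Set.eq_of_subset_of_ncard_le (pair_snd_penultimate_subset hC.1 hYC)
      (by rw [Set.ncard_pair hC.1.snd_ne_penultimate]; omega)
  have hx := neighborSet_tail_snd_inter_subset hC hlen hY hYC
    (Set.one_lt_ncard_iff_nontrivial.1 (by omega)) (Set.inter_eq_right.1 hYv) hpair.symm.subset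
  have hxmem : C.tail.snd ∉ insert C.snd (insert v Y) := by
    rintro (h | h | h)
    · exact (C.tail.adj_snd (not_nil_tail_of_isCycle hC.1)).ne' h
    · exact tail_snd_ne_of_isCycle hC.1 h
    · exact hYC _ (tail_snd_mem_support C) h
  have hle :=
    hB.ncard_crossEdges_insert_le_of_spanning h3.connected hC.1 hlen hY hYC hy hvy hspan
  have hlt_snd := ncard_crossEdges_insert_lt_insert_snd h3 hC hY hYC hy hvy
  have hlt_tail_snd := ncard_crossEdges_lt_insert hxmem (h3.three_le_ncard_neighborSet _) hx
  have hcut := ncard_crossEdges_insert (G := G) hv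
  rw [hYv] at hcut
  omega

lemma exists_adj_mem_support_ne (h3 : ThreeConnected G) (hC : C.IsCycle) (hY : Y.Nonempty)
    (hYC : ∀ z ∈ C.support, z ∉ Y) (hcard : Y.ncard ≤ 2) (hrY : r ∉ Y) (hrC : r ∉ C.support)
    (hR : ∀ z ∉ Y, z ∉ C.support → z = r) :
    ∃ w ∈ C.support, (∃ y ∈ Y, G.Adj w y) ∧ ∃ x ∈ C.support, x ≠ w ∧ G.Adj r x := by
  have mem_support {z : V} (hzY : z ∉ Y) (hzr : z ≠ r) : z ∈ C.support :=
    of_not_not fun hzC => hzr (hR z hzY hzC)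
  obtain ⟨x, hrx, hxY⟩ : ∃ x ∈ G.neighborSet r, x ∉ Y :=
    Set.exists_mem_notMem_of_ncard_lt_ncard
      (Nat.lt_of_le_of_lt hcard (h3.three_le_ncard_neighborSet r))
  obtain ⟨b, hbC, hbx⟩ : ∃ b ∈ C.support, b ≠ x := by
    by_cases hvx : v = x
    · exact ⟨C.snd, C.getVert_mem_support 1, hvx ▸ (C.adj_snd hC.not_nil).ne'⟩
    · exact ⟨v, C.start_mem_support, hvx⟩
  obtain ⟨y, ⟨hy, -⟩, w, ⟨hwY, hw⟩, hyw⟩ := h3.exists_adj (X := Y) (s := {r, x})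
    ((Set.ncard_insert_le r {x}).trans (by simp))
    (hY.imp fun y hy => ⟨hy, by rintro (rfl | rfl) <;> contradiction⟩)
    ⟨b, hYC b hbC, by rintro (rfl | rfl) <;> contradiction⟩
  rw [Set.mem_insert_iff, not_or] at hw
  exact ⟨w, mem_support hwY hw.1, ⟨y, hy, hyw.symm⟩, x, mem_support hxY hrx.ne', Ne.symm hw.2, hrx⟩

lemma exists_adj_mem_support_ne_snd (h3 : ThreeConnected G) (hC : IsLongestCycle G C)
    (hY : (G.induce Y).Connected) (hYC : ∀ z ∈ C.support, z ∉ Y) (hy : y ∈ Y) (hvy : G.Adj v y)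
    (hrC : r ∉ C.support) (hR : ∀ z ∉ Y, z ∉ C.support → z = r)
    {x : V} (hx : x ∈ C.support) (hxv : x ≠ v) (hrx : G.Adj r x) :
    ∃ a ∈ C.support, a ≠ v ∧ a ≠ C.snd ∧ G.Adj r a := by
  by_cases hrY : ∃ b ∈ Y, G.Adj r b
  · obtain ⟨b, hb, hrb⟩ := hrY
    have hDC : ∀ z ∈ C.support, z ∉ insert r Y := by
      rintro z hz (rfl | hzY)
      exacts [hrC hz, hYC z hz hzY]
    refine ⟨x, hx, hxv, ?_, hrx⟩
    rintro rfl
    exact hC.not_adj_snd (connected_induce_insert hY hb hrb) hDC (Set.mem_insert_of_mem r hy) hvy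
      (Set.mem_insert r Y) hrx.symm
  · push Not at hrY
    obtain ⟨a, hra, ha⟩ : ∃ a ∈ G.neighborSet r, a ∉ ({v, C.snd} : Set V) := by
      refine Set.exists_mem_notMem_of_ncard_lt_ncard ?_
      rw [Set.ncard_pair (C.adj_snd hC.1.not_nil).ne]
      exact h3.three_le_ncard_neighborSet r
    rw [Set.mem_insert_iff, not_or] at ha
    exact ⟨a, of_not_not fun haC => hra.ne' (hR a (fun haY => hrY a haY hra) haC), ha.1, ha.2, hra⟩

lemma length_add_ncard_add_ncard_eq (hC : C.IsCycle) (hYC : ∀ z ∈ C.support, z ∉ Y) :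
    C.length + Y.ncard + {z | z ∉ Y ∧ z ∉ C.support}.ncard = Nat.card V := by
  have hdisj : Disjoint {z | z ∈ C.support} Y := Set.disjoint_left.2 hYC
  have hR : {z | z ∉ Y ∧ z ∉ C.support} = ({z | z ∈ C.support} ∪ Y)ᶜ := by
    ext z
    simp only [Set.mem_ofPred_eq, Set.mem_compl_iff, Set.mem_union]
    tauto
  rw [← ncard_setOf_mem_support_of_isCycle hC, ← Set.ncard_union_eq hdisj, hR,
    Set.ncard_add_ncard_compl]

lemma IsLargestBond.one_lt_ncard (hB : IsLargestBond G (crossEdges G Y))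
    (h3 : ThreeConnected G) (hY : Y.Nonempty) : 1 < Y.ncard := by
  by_contra! h
  obtain ⟨y, rfl⟩ := Set.ncard_eq_one.1 (le_antisymm h ((Set.ncard_pos (Set.toFinite _)).2 hY))
  exact not_isLargestBond_crossEdges_singleton h3 y hB

theorem not_isLargestBond_crossEdges (h3 : ThreeConnected G) (hC : IsLongestCycle G C)
    (hlen : Nat.card V ≤ C.length + 3) (hY : (G.induce Y).Connected)
    (hYC : ∀ z ∈ C.support, z ∉ Y) : ¬ IsLargestBond G (crossEdges G Y) := by
  intro hB
  have hYne : Y.Nonempty := Set.nonempty_coe_sort.1 hY.nonempty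
  have hcount := length_add_ncard_add_ncard_eq hC.1 hYC
  have hYcard := hB.one_lt_ncard h3 hYne
  obtain ⟨r, hrY, hrC⟩ : ∃ r ∉ Y, r ∉ C.support := by
    by_contra! hspan
    obtain ⟨y, hy, w, hwY, hyw⟩ := exists_adj_mem_notMem h3.connected.preconnected hYne
      ⟨v, hYC v C.start_mem_support⟩
    obtain ⟨D, hD, hDC⟩ := hC.exists_of_mem_support (hspan w hwY)
    obtain ⟨r, hrY, hrD⟩ := hB.exists_notMem_support h3 hD hY
      (fun z hz => hYC z ((hDC z).1 hz)) (by omega) hy hyw.symm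
    exact hrD ((hDC r).2 (hspan r hrY))
  set R : Set V := {z | z ∉ Y ∧ z ∉ C.support}
  have hrR : r ∈ R := ⟨hrY, hrC⟩
  have hRpos : 0 < R.ncard := (Set.ncard_pos (Set.toFinite _)).2 ⟨r, hrR⟩
  have hRle : R.ncard ≤ 1 := by omega
  have hR : ∀ z ∉ Y, z ∉ C.support → z = r := fun z hzY hzC =>
    (Set.ncard_le_one_iff (Set.toFinite _)).1 hRle ⟨hzY, hzC⟩ hrR
  obtain ⟨w, hwC, ⟨y, hy, hwy⟩, x, hxC, hxw, hrx⟩ :=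
    exists_adj_mem_support_ne h3 hC.1 hYne hYC (by omega) hrY hrC hR
  obtain ⟨D, hD, hDC⟩ := hC.exists_of_mem_support hwC
  simp only [← hDC] at hYC hrC hR hxC
  have hr := exists_adj_mem_support_ne_snd h3 hD hY hYC hy hwy hrC hR hxC hxw hrx
  have hthree := hB.three_le_ncard h3 hD hY hYC hy hwy fun z hzY hzD => hR z hzY hzD ▸ hr
  omega

end LargestBond

/-- if a simple 3-connected graph on `n` vertices has circumference at least
`n - 3`, then every longest cycle meets every largest bond. -/
theorem longest_cycle_meets_largest_bond_of_circ {V : Type*} [Fintype V] (G : SimpleGraph V)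
    (h3 : ThreeConnected G)
    (hcirc : ∃ (v : V) (C₀ : G.Walk v v), C₀.IsCycle ∧ Nat.card V ≤ C₀.length + 3)
    (u : V) (C : G.Walk u u) (hC : IsLongestCycle G C)
    (B : Set (Sym2 V)) (hB : IsLargestBond G B) :
    ∃ e ∈ C.edges, e ∈ B := by
  by_contra! hB_disj
  obtain ⟨Y, hY, hYC, rfl⟩ := hB.1.exists_eq_crossEdges_of_walk h3.connected C hB_disj
  obtain ⟨v, C₀, hC₀, hlen⟩ := hcirc
  have hle : C₀.length ≤ C.length := hC.2 v C₀ hC₀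
  exact not_isLargestBond_crossEdges h3 hC (by omega) hY hYC hB
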